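/- arXiv:2209.15347 — 3 statements merged into one kernel-verified Lean document; each statement's English description precedes it below -/
import Mathlib

section
/- Let (G, μ) be a measure space, let s > 0 be a real number, and let w : G → ℝ be measurable with w > 0 a.e. and W := ∫ w^{1/(1+s)} dμ ∈ (0, ∞). Define ρ*(g) := w(g)^{1/(1+s)} / W. Then ∫ ρ* dμ = 1, ∫ w (ρ*)^{-s} dμ = W^{1+s}, and consequently for every measurable ρ : G → ℝ with ρ > 0 a.e., ∫ ρ dμ = 1 and w ρ^{-s} integrable, one has ∫ w (ρ*)^{-s} dμ ≤ ∫ w ρ^{-s} dμ. -/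
open MeasureTheory

/-- Optimality of the high-resolution quantization-point density (Proposition III.1):
the density `ρ*` proportional to `w^{1/(1+s)}` integrates to one, achieves the value
`W^{1+s}` for the high-resolution optimality-loss functional `ρ ↦ ∫ w ρ^{-s} dμ`,
and minimizes this functional over all probability densities. -/
theorem goq_optimal_density
    {G : Type*} [MeasurableSpace G] (μ : Measure G) (s : ℝ) (hs : 0 < s)
    (w : G → ℝ) (hwm : Measurable w) (hw0 : ∀ᵐ g ∂μ, 0 < w g)
    (hWint : Integrable (fun g => (w g) ^ (1 / (1 + s))) μ)
    (W : ℝ) (hW : W = ∫ g, (w g) ^ (1 / (1 + s)) ∂μ) (hWpos : 0 < W)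
    (ρstar : G → ℝ) (hρstar : ∀ g, ρstar g = (w g) ^ (1 / (1 + s)) / W) :
    (∫ g, ρstar g ∂μ = 1) ∧
    (∫ g, w g * (ρstar g) ^ (-s) ∂μ = W ^ (1 + s)) ∧
    (∀ ρ : G → ℝ, Measurable ρ → (∀ᵐ g ∂μ, 0 < ρ g) → (∫ g, ρ g ∂μ = 1) →
      Integrable (fun g => w g * (ρ g) ^ (-s)) μ →
      ∫ g, w g * (ρstar g) ^ (-s) ∂μ ≤ ∫ g, w g * (ρ g) ^ (-s) ∂μ) := by
  have h1s : (0 : ℝ) < 1 + s := by linarith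
  have hpw : ∀ g, 0 < w g → ((w g) ^ (1 / (1 + s))) ^ (1 + s) = w g := by
    intro g hg
    rw [← Real.rpow_mul hg.le, one_div, inv_mul_cancel₀ h1s.ne', Real.rpow_one]
  have hWs : W ^ (1 + s) = W * W ^ s := by
    rw [Real.rpow_add hWpos, Real.rpow_one]
  have key : ∫ g, w g * (ρstar g) ^ (-s) ∂μ = W ^ (1 + s) := by
    have : ∫ g, w g * (ρstar g) ^ (-s) ∂μ = ∫ g, (w g) ^ (1 / (1 + s)) * W ^ s ∂μ := by
      refine integral_congr_ae ?_
      filter_upwards [hw0] with g hg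
      have hu : 0 < (w g) ^ (1 / (1 + s)) := Real.rpow_pos_of_pos hg _
      have h := hpw g hg
      rw [hρstar]
      generalize (w g) ^ (1 / (1 + s)) = u at *
      rw [← h, Real.rpow_neg (by positivity), Real.div_rpow hu.le hWpos.le,
        Real.rpow_add hu, Real.rpow_one]
      have := Real.rpow_pos_of_pos hu s
      have := Real.rpow_pos_of_pos hWpos s
      field_simp
    rw [this, integral_mul_const, ← hW, hWs]
  refine ⟨?_, key, ?_⟩
  · simp only [hρstar]
    rw [integral_div, ← hW, div_self hWpos.ne']
  · intro ρ _ hρ0 hρ1 hint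
    have hρint : Integrable ρ μ := by
      by_contra h
      rw [integral_undef h] at hρ1
      exact zero_ne_one hρ1
    have hlow : ∫ g, ((1 + s) * W ^ s * (w g) ^ (1 / (1 + s)) - s * W ^ (1 + s) * ρ g) ∂μ
        = W ^ (1 + s) := by
      rw [integral_sub (hWint.const_mul _) (hρint.const_mul _), integral_const_mul,
        integral_const_mul, hρ1, ← hW, hWs]
      ring
    rw [key, ← hlow]
    refine integral_mono_ae ((hWint.const_mul _).sub (hρint.const_mul _)) hint ?_
    filter_upwards [hw0, hρ0] with g hg hr
    have hu : 0 < (w g) ^ (1 / (1 + s)) := Real.rpow_pos_of_pos hg _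
    have h := hpw g hg
    generalize (w g) ^ (1 / (1 + s)) = u at *
    generalize ρ g = r at *
    have hx : 0 < u / (r * W) := by positivity
    have hb := one_add_mul_self_le_rpow_one_add (s := u / (r * W) - 1) (by linarith)
      (p := 1 + s) (by linarith)
    rw [add_sub_cancel, Real.div_rpow hu.le (by positivity), h,
      Real.mul_rpow hr.le hWpos.le, hWs, Real.rpow_add hr, Real.rpow_one] at hb
    rw [hWs, Real.rpow_neg hr.le]
    have hrs := Real.rpow_pos_of_pos hr s
    have hWs' := Real.rpow_pos_of_pos hWpos s
    have hm := mul_le_mul_of_nonneg_left hb (a := r * (W * W ^ s)) (by positivity)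
    calc (1 + s) * W ^ s * u - s * (W * W ^ s) * r
        = r * (W * W ^ s) * (1 + (1 + s) * (u / (r * W) - 1)) := by field_simp; ring
      _ ≤ _ := hm
      _ = w g * (r ^ s)⁻¹ := by field_simp
end

section
/- Let g > 0 be a real number. Then for every x > 0, exp(−1/(g x))/x ≤ g · exp(−1), with equality if and only if x = 1/g; that is, x = 1/g is the unique global maximizer over (0, ∞) of the goal function x ↦ exp(−1/(g x))/x. -/
/-- Table I: for the energy-efficiency goal function `f(x;g) = exp(-1/(g x))/x`, the
decision `x = 1/g` is the unique global maximizer over `(0,∞)`. -/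
theorem goq_ee_table_optimal_decision
    (g : ℝ) (hg : 0 < g) :
    ∀ x : ℝ, 0 < x →
      (Real.exp (-(1 / (g * x))) / x ≤ g * Real.exp (-1) ∧
        (Real.exp (-(1 / (g * x))) / x = g * Real.exp (-1) ↔ x = 1 / g)) := by
  intro x hx
  have key : ∀ t : ℝ, t ≠ 1 → t * Real.exp (-t) < Real.exp (-1) := by
    intro t ht
    have h := Real.add_one_lt_exp (sub_ne_zero.mpr ht)
    have h2 : Real.exp (-1) = Real.exp (t - 1) * Real.exp (-t) := by
      rw [← Real.exp_add]; congr 1; ring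
    rw [h2]
    exact mul_lt_mul_of_pos_right (by linarith) (Real.exp_pos _)
  have hf : Real.exp (-(1 / (g * x))) / x
      = g * (1 / (g * x) * Real.exp (-(1 / (g * x)))) := by
    generalize Real.exp (-(1 / (g * x))) = E
    field_simp
  by_cases hxg : x = 1 / g
  · have h1 : 1 / (g * x) = 1 := by
      rw [hxg]; field_simp
    have he : Real.exp (-(1 / (g * x))) / x = g * Real.exp (-1) := by
      rw [hf, h1, one_mul]
    exact ⟨he.le, fun _ => hxg, fun _ => he⟩
  · have h1 : 1 / (g * x) ≠ 1 := by
      intro h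
      apply hxg
      field_simp at h ⊢
      linarith
    have hlt : Real.exp (-(1 / (g * x))) / x < g * Real.exp (-1) := by
      rw [hf]
      exact mul_lt_mul_of_pos_left (key _ h1) hg
    exact ⟨hlt.le, fun h => absurd h hlt.ne, fun h => absurd h hxg⟩
end

section
/- Let F : ℝ^d → ℝ be twice continuously differentiable on a neighborhood of x₀ := χ(g₀), where χ : ℝ^p → ℝ^d is differentiable at g₀ ∈ ℝ^p, and suppose the derivative of F vanishes at x₀. Let J := Dχ(g₀) and let H := D²F(x₀) be the second derivative of F at x₀ as a bilinear form. Then F(χ(z)) − F(χ(g₀)) − (1/2) H(J(z − g₀), J(z − g₀)) = o(‖z − g₀‖²) as z → g₀. -/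
open Filter Asymptotics

/-- Second order Taylor expansion at a critical point. -/
theorem taylor_two_critical {E : Type*} [NormedAddCommGroup E] [NormedSpace ℝ E]
    (F : E → ℝ) (x₀ : E) (hF : ContDiffAt ℝ 2 F x₀) (h0 : fderiv ℝ F x₀ = 0) :
    (fun x => F x - F x₀ - (1 / 2) * fderiv ℝ (fderiv ℝ F) x₀ (x - x₀) (x - x₀))
      =o[nhds x₀] (fun x => ‖x - x₀‖ ^ 2) := by
  set B := fderiv ℝ (fderiv ℝ F) x₀ with hB
  have hsymm : ∀ v w, B v w = B w v := fun v w =>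
    (hF.isSymmSndFDerivAt (by simp)).eq v w
  have hd : DifferentiableAt ℝ (fderiv ℝ F) x₀ :=
    (hF.fderiv_right (m := 1) (by norm_num)).differentiableAt (by norm_num)
  have hlo := hd.hasFDerivAt.isLittleO
  have hev : ∀ᶠ x in nhds x₀, DifferentiableAt ℝ F x := by
    filter_upwards [hF.eventually (by simp)] with x hx
    exact hx.differentiableAt (by norm_num)
  rw [isLittleO_iff]
  intro c hc
  obtain ⟨ε, hε, hball⟩ := Metric.eventually_nhds_iff_ball.1 (hev.and (hlo.def hc))
  filter_upwards [Metric.ball_mem_nhds x₀ hε] with x hx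
  have key : ∀ y ∈ Metric.closedBall x₀ ‖x - x₀‖,
      HasFDerivWithinAt (fun y => F y - F x₀ - (1 / 2) * B (y - x₀) (y - x₀))
        (fderiv ℝ F y - B (y - x₀)) (Metric.closedBall x₀ ‖x - x₀‖) y := by
    intro y hy
    have hy' : y ∈ Metric.ball x₀ ε := by
      rw [Metric.mem_closedBall] at hy
      rw [Metric.mem_ball] at hx ⊢
      rw [← dist_eq_norm] at hy
      exact hy.trans_lt hx
    have h1 := (hball y hy').1.hasFDerivAt
    have h2 : HasFDerivAt (fun y => y - x₀) (ContinuousLinearMap.id ℝ E) y :=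
      (hasFDerivAt_id y).sub_const x₀
    have h3 : HasFDerivAt (fun y => B (y - x₀)) (B.comp (ContinuousLinearMap.id ℝ E)) y :=
      B.hasFDerivAt.comp y h2
    have h4 := ((h1.sub_const (F x₀)).sub ((h3.clm_apply h2).const_mul (1 / 2)))
    refine (h4.congr_fderiv ?_).hasFDerivWithinAt
    ext v
    simp [hsymm v y, hsymm v x₀]
    ring
  have hb : ∀ y ∈ Metric.closedBall x₀ ‖x - x₀‖,
      ‖fderiv ℝ F y - B (y - x₀)‖ ≤ c * ‖x - x₀‖ := by
    intro y hy
    rw [Metric.mem_closedBall, dist_eq_norm] at hy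
    have hy' : y ∈ Metric.ball x₀ ε := by
      rw [Metric.mem_ball, dist_eq_norm] at hx ⊢
      exact hy.trans_lt hx
    have := (hball y hy').2
    rw [h0, sub_zero] at this
    exact this.trans (by gcongr)
  have := (convex_closedBall x₀ ‖x - x₀‖).norm_image_sub_le_of_norm_hasFDerivWithin_le key hb
    (Metric.mem_closedBall_self (norm_nonneg _)) (by simp [dist_eq_norm] : x ∈ _)
  simp only [sub_self, map_zero, mul_zero, sub_zero] at this
  rw [norm_pow, norm_norm, sq, ← mul_assoc]
  exact this

/-- Pointwise content of the high-resolution equivalent of Proposition IV.1: with `F`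
`C²` near the optimal decision `x₀ = χ(g₀)` where its derivative vanishes, and `χ`
differentiable at `g₀`, the optimality gap `F(χ(z)) - F(χ(g₀))` equals the quadratic
form `(1/2) H(J(z-g₀), J(z-g₀))` up to `o(‖z-g₀‖²)`. -/
theorem goq_vector_hr_equivalent
    (d p : ℕ) (F : EuclideanSpace ℝ (Fin d) → ℝ)
    (χ : EuclideanSpace ℝ (Fin p) → EuclideanSpace ℝ (Fin d))
    (g₀ : EuclideanSpace ℝ (Fin p))
    (U : Set (EuclideanSpace ℝ (Fin d))) (hU : U ∈ nhds (χ g₀))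
    (hF : ContDiffOn ℝ 2 F U)
    (hχ : DifferentiableAt ℝ χ g₀)
    (hgrad : fderiv ℝ F (χ g₀) = 0) :
    (fun z => F (χ z) - F (χ g₀)
        - (1 / 2) * iteratedFDeriv ℝ 2 F (χ g₀)
            ![fderiv ℝ χ g₀ (z - g₀), fderiv ℝ χ g₀ (z - g₀)])
      =o[nhds g₀] (fun z => ‖z - g₀‖ ^ 2) := by
  have hFa : ContDiffAt ℝ 2 F (χ g₀) := hF.contDiffAt hU
  have hT := (taylor_two_critical F (χ g₀) hFa hgrad).comp_tendsto hχ.continuousAt.tendsto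
  have hO : (fun z => χ z - χ g₀) =O[nhds g₀] (fun z => z - g₀) := hχ.isBigO_sub
  have ho : (fun z => χ z - χ g₀ - fderiv ℝ χ g₀ (z - g₀)) =o[nhds g₀] (fun z => z - g₀) :=
    hχ.hasFDerivAt.isLittleO
  have hJ : (fun z => fderiv ℝ χ g₀ (z - g₀)) =O[nhds g₀] (fun z => z - g₀) :=
    (fderiv ℝ χ g₀).isBigO_sub _ _
  set B := fderiv ℝ (fderiv ℝ F) (χ g₀) with hB
  have hbil : ∀ u v : EuclideanSpace ℝ (Fin p) → EuclideanSpace ℝ (Fin d),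
      (fun z => B (u z) (v z)) =O[nhds g₀] (fun z => ‖u z‖ * ‖v z‖) := by
    intro u v
    refine IsBigO.of_bound ‖B‖ (Eventually.of_forall fun z => ?_)
    simpa [mul_assoc] using B.le_opNorm₂ (u z) (v z)
  have h1 := hT.trans_isBigO (hO.norm_norm.pow 2)
  have h2 := (hbil (fun z => χ z - χ g₀ - fderiv ℝ χ g₀ (z - g₀)) (fun z => χ z - χ g₀)).trans_isLittleO
    (ho.norm_norm.mul_isBigO hO.norm_norm)
  have h3 := (hbil (fun z => fderiv ℝ χ g₀ (z - g₀))
    (fun z => χ z - χ g₀ - fderiv ℝ χ g₀ (z - g₀))).trans_isLittleO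
    (hJ.norm_norm.mul_isLittleO ho.norm_norm)
  simp only [← sq] at h2 h3
  refine (h1.add ((h2.add h3).const_mul_left (1 / 2))).congr_left fun z => ?_
  simp only [iteratedFDeriv_two_apply, Function.comp, Matrix.cons_val_zero, Matrix.cons_val_one,
    ← hB]
  simp only [map_sub, sub_apply]
  ring
end
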